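/- Let n be a natural number, N = 2^n, let F be the 2×2 matrix over ZMod 2 with rows (1,0) and (1,1), and let B_N be the bit-reversal permutation matrix on Fin N. Then B_N · F^{⊗n} = F^{⊗n} · B_N. -/

import Mathlib

/-!
Bit reversal moves the least significant bit of an index to the top. The Kronecker power is
defined by peeling off the most significant bit, but by associativity of the Kronecker product
the least significant bit can be peeled off in the same way (`kronPow_lowIdx`). Comparing the two
recursions shows that simultaneous bit reversal of the row and column index leaves every entry of
`F^{⊗n}` unchanged (`kronPow_bitRevPerm`), for any kernel `F`. Since left and right
multiplication by the permutation matrix of `σ` only relabels rows by `σ⁻¹` and columns by `σ`,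
this invariance is exactly the claimed commutation.
-/

open Matrix Kronecker

/-- The Arıkan polar kernel, the 2×2 matrix over `ZMod 2` with rows (1,0) and (1,1). -/
def polarKernel : Matrix (Fin 2) (Fin 2) (ZMod 2) := !![1, 0; 1, 1]

/-- The index identification `Fin 2 × Fin (2^n) ≃ Fin (2^(n+1))` sending the
pair `(i₁, i₂)` (with `i₁` the major/most-significant component) to `i₂ + 2^n * i₁`. -/
def kronIdx (n : ℕ) : Fin 2 × Fin (2 ^ n) ≃ Fin (2 ^ (n + 1)) :=
  finProdFinEquiv.trans (finCongr (pow_succ' 2 n).symm)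

/-- The n-fold Kronecker power of a 2×2 matrix over `ZMod 2`, as a `2^n × 2^n` matrix. -/
def kronPow (F : Matrix (Fin 2) (Fin 2) (ZMod 2)) :
    (n : ℕ) → Matrix (Fin (2 ^ n)) (Fin (2 ^ n)) (ZMod 2)
  | 0 => 1
  | n + 1 => Matrix.reindex (kronIdx n) (kronIdx n) (F ⊗ₖ kronPow F n)

/-- The bit-reversal permutation on `Fin (2^n)`: the index with binary digits
(b₀, …, b_{n−1}) (least significant bit first) is sent to the index with binary
digits (b_{n−1}, …, b₀). Defined recursively: the least significant bit of the
input becomes the most significant bit of the output. -/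
def bitRevPerm : (n : ℕ) → Equiv.Perm (Fin (2 ^ n))
  | 0 => Equiv.refl _
  | n + 1 =>
    (finCongr (pow_succ 2 n)).trans <|
      finProdFinEquiv.symm.trans <|
        (Equiv.prodCongr (bitRevPerm n) (Equiv.refl (Fin 2))).trans <|
          (Equiv.prodComm (Fin (2 ^ n)) (Fin 2)).trans <|
            finProdFinEquiv.trans (finCongr (pow_succ' 2 n).symm)

/-- The permutation matrix over `ZMod 2` of a permutation σ of `Fin N`:
its (i, j) entry is 1 exactly when `i = σ j`. -/
def permMatrix {N : ℕ} (σ : Equiv.Perm (Fin N)) : Matrix (Fin N) (Fin N) (ZMod 2) :=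
  Matrix.of fun i j => if i = σ j then 1 else 0

/-- The bit-reversal permutation matrix on `Fin (2^n)`. -/
def bitRevMatrix (n : ℕ) : Matrix (Fin (2 ^ n)) (Fin (2 ^ n)) (ZMod 2) :=
  permMatrix (bitRevPerm n)

/-- The index identification `Fin (2^n) × Fin 2 ≃ Fin (2^(n+1))` sending `(q, r)` to `r + 2 * q`,
so that `r` is the least significant bit. -/
def lowIdx (n : ℕ) : Fin (2 ^ n) × Fin 2 ≃ Fin (2 ^ (n + 1)) :=
  finProdFinEquiv.trans (finCongr (pow_succ 2 n).symm)

lemma bitRevPerm_lowIdx (n : ℕ) (q : Fin (2 ^ n)) (r : Fin 2) :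
    bitRevPerm (n + 1) (lowIdx n (q, r)) = kronIdx n (r, bitRevPerm n q) := by
  have h : finProdFinEquiv.symm (finCongr (pow_succ 2 n) (lowIdx n (q, r))) = (q, r) :=
    finProdFinEquiv.symm_apply_apply (q, r)
  simp only [bitRevPerm, Equiv.trans_apply, h, kronIdx]
  rfl

/-- Attaching a bit at the top and a bit at the bottom of an index commute. -/
lemma lowIdx_kronIdx (n : ℕ) (a : Fin 2) (q : Fin (2 ^ n)) (r : Fin 2) :
    lowIdx (n + 1) (kronIdx n (a, q), r) = kronIdx (n + 1) (a, lowIdx n (q, r)) := by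
  apply Fin.ext
  simp [lowIdx, kronIdx]
  ring

lemma kronPow_kronIdx (F : Matrix (Fin 2) (Fin 2) (ZMod 2)) (n : ℕ) (a b : Fin 2)
    (p q : Fin (2 ^ n)) :
    kronPow F (n + 1) (kronIdx n (a, p)) (kronIdx n (b, q)) = F a b * kronPow F n p q := by
  simp [kronPow]

/-- The Kronecker power also factors off its kernel at the least significant bit:
`F^{⊗(n+1)} = F^{⊗n} ⊗ F`. -/
lemma kronPow_lowIdx (F : Matrix (Fin 2) (Fin 2) (ZMod 2)) (n : ℕ) (p q : Fin (2 ^ n))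
    (r s : Fin 2) :
    kronPow F (n + 1) (lowIdx n (p, r)) (lowIdx n (q, s)) = kronPow F n p q * F r s := by
  induction n with
  | zero =>
    have h : ∀ (p : Fin (2 ^ 0)) (r : Fin 2), lowIdx 0 (p, r) = kronIdx 0 (r, p) := by
      decide
    rw [h, h, kronPow_kronIdx, mul_comm]
  | succ n ih =>
    obtain ⟨⟨a, p⟩, rfl⟩ := (kronIdx n).surjective p
    obtain ⟨⟨b, q⟩, rfl⟩ := (kronIdx n).surjective q
    rw [lowIdx_kronIdx, lowIdx_kronIdx, kronPow_kronIdx, ih, kronPow_kronIdx, mul_assoc]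

lemma kronPow_bitRevPerm (F : Matrix (Fin 2) (Fin 2) (ZMod 2)) (n : ℕ) (i j : Fin (2 ^ n)) :
    kronPow F n (bitRevPerm n i) (bitRevPerm n j) = kronPow F n i j := by
  induction n with
  | zero => rfl
  | succ n ih =>
    obtain ⟨⟨p, r⟩, rfl⟩ := (lowIdx n).surjective i
    obtain ⟨⟨q, s⟩, rfl⟩ := (lowIdx n).surjective j
    rw [bitRevPerm_lowIdx, bitRevPerm_lowIdx, kronPow_kronIdx, ih, kronPow_lowIdx, mul_comm]

/-- The bit-reversal permutation matrix commutes with the n-fold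
Kronecker power of the Arıkan kernel: `B_N · F^{⊗n} = F^{⊗n} · B_N`. -/
theorem bitRevMatrix_mul_kronPow_comm (n : ℕ) :
    bitRevMatrix n * kronPow polarKernel n = kronPow polarKernel n * bitRevMatrix n := by
  ext i j
  obtain ⟨i, rfl⟩ := (bitRevPerm n).surjective i
  have hl : (bitRevMatrix n * kronPow polarKernel n) (bitRevPerm n i) j
      = kronPow polarKernel n i j := by
    simp [Matrix.mul_apply, bitRevMatrix, permMatrix]
  have hr : (kronPow polarKernel n * bitRevMatrix n) (bitRevPerm n i) j
      = kronPow polarKernel n (bitRevPerm n i) (bitRevPerm n j) := by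
    simp [Matrix.mul_apply, bitRevMatrix, permMatrix]
  rw [hl, hr, kronPow_bitRevPerm]
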